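/- arXiv:1304.1975 — 2 statements merged into one kernel-verified Lean document; each statement's English description precedes it below -/
import Mathlib

section
/- Let T = M_w E M_u be bounded on L²(Σ). If |E(uw)|² = E(|u|²)·E(|w|²) μ-a.e., then T is centered. -/
/-!
The operator turns out to be normal, and every normal operator is centered.

Write `g = E(uw)`. The hypothesis is the equality case of the conditional Cauchy–Schwarz
inequality, and it forces `E(|w|²) ū = ḡ w` and, symmetrically, `E(|u|²) w̄ = ḡ u`
(`equality_case`). The adjoint is `T* f = ū E(w̄ f)` (`adjoint_coeFn`), so
`T*T f = ū E(|w|²) E(uf) = ḡ w E(uf)` and `T T* f = w E(|u|²) E(w̄ f)`. These agree because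
`ḡ (uf) = E(|u|²) (w̄ f)` and 𝒜-measurable factors may be pulled out of `E` on both sides.

Several of the products above are not known to be integrable. The remedy is to multiply by the
strictly positive 𝒜-measurable function `cut a b = 1 / (1 + |a| + |b|)`, which makes
the factors `a`, `b` bounded, and to cancel it in the end.
-/

open MeasureTheory ComplexConjugate

/-- A bounded operator `A` on a Hilbert space is *centered* if the family
`{A*ⁿ Aⁿ, Aᵏ A*ᵏ : n, k ≥ 0}` consists of mutually commuting operators. -/
def Centered {H : Type*} [NormedAddCommGroup H] [InnerProductSpace ℂ H] [CompleteSpace H]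
    (A : H →L[ℂ] H) : Prop :=
  ∀ B ∈ {B : H →L[ℂ] H | ∃ n : ℕ,
      B = (ContinuousLinearMap.adjoint A) ^ n * A ^ n ∨
      B = A ^ n * (ContinuousLinearMap.adjoint A) ^ n},
    ∀ C ∈ {C : H →L[ℂ] H | ∃ k : ℕ,
      C = (ContinuousLinearMap.adjoint A) ^ k * A ^ k ∨
      C = A ^ k * (ContinuousLinearMap.adjoint A) ^ k},
      Commute B C

section Aux

variable {X : Type*} {m m0 : MeasurableSpace X} {μ : Measure X}

/-- The strictly positive weight `1 / (1 + |a| + |b|)`, as a complex-valued function; multiplying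
`a` or `b` by it gives a function bounded by `1`. -/
noncomputable def cut (a b : X → ℂ) (x : X) : ℂ := (((1 + ‖a x‖ + ‖b x‖)⁻¹ : ℝ) : ℂ)

lemma cut_ne_zero (a b : X → ℂ) (x : X) : cut a b x ≠ 0 := by
  have : 0 < (1 + ‖a x‖ + ‖b x‖) := by positivity
  simp only [cut, ne_eq, Complex.ofReal_eq_zero]
  positivity

lemma conj_cut (a b : X → ℂ) (x : X) : conj (cut a b x) = cut a b x := Complex.conj_ofReal _

lemma norm_cut (a b : X → ℂ) (x : X) : ‖cut a b x‖ = (1 + ‖a x‖ + ‖b x‖)⁻¹ := by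
  rw [cut, Complex.norm_real, Real.norm_of_nonneg (by positivity)]

lemma norm_cut_le (a b : X → ℂ) (x : X) : ‖cut a b x‖ ≤ 1 := by
  rw [norm_cut]
  apply inv_le_one_of_one_le₀
  linarith [norm_nonneg (a x), norm_nonneg (b x)]

lemma norm_cut_mul_left_le (a b : X → ℂ) (x : X) : ‖cut a b x * a x‖ ≤ 1 := by
  rw [norm_mul, norm_cut, inv_mul_le_iff₀ (by positivity)]
  linarith [norm_nonneg (a x), norm_nonneg (b x)]

lemma norm_cut_mul_right_le (a b : X → ℂ) (x : X) : ‖cut a b x * b x‖ ≤ 1 := by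
  rw [norm_mul, norm_cut, inv_mul_le_iff₀ (by positivity)]
  linarith [norm_nonneg (a x), norm_nonneg (b x)]

lemma stronglyMeasurable_cut {a b : X → ℂ} (ha : StronglyMeasurable[m] a)
    (hb : StronglyMeasurable[m] b) : StronglyMeasurable[m] (cut a b) := by
  have h1 : StronglyMeasurable[m] fun x => (1 + ‖a x‖ + ‖b x‖)⁻¹ :=
    (((stronglyMeasurable_const (b := (1 : ℝ))).add ha.norm).add hb.norm).inv₀
  exact Complex.continuous_ofReal.comp_stronglyMeasurable h1

lemma stronglyMeasurable_conj {a : X → ℂ} (ha : StronglyMeasurable[m] a) :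
    StronglyMeasurable[m] (fun x => conj (a x)) :=
  Complex.continuous_conj.comp_stronglyMeasurable ha

lemma memLp_conj {p : ENNReal} {f : X → ℂ} (hf : MemLp f p μ) :
    MemLp (fun x => conj (f x)) p μ := hf.star

lemma integrable_mul_of_memLp {f g : X → ℂ} (hf : MemLp f 2 μ) (hg : MemLp g 2 μ) :
    Integrable (fun x => f x * g x) μ := hf.integrable_mul hg

lemma memLp_bdd_mul {c f : X → ℂ} (hc : AEStronglyMeasurable c μ) (hb : ∀ x, ‖c x‖ ≤ 1)
    (hf : MemLp f 2 μ) : MemLp (fun x => c x * f x) 2 μ := by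
  refine MemLp.of_le_mul (c := 1) hf (hc.mul hf.1) (.of_forall fun x => ?_)
  rw [norm_mul]
  exact mul_le_mul_of_nonneg_right (hb x) (norm_nonneg _)

lemma condExp_pull {φ h : X → ℂ} (hφ : StronglyMeasurable[m] φ)
    (hφh : Integrable (fun x => φ x * h x) μ) (hh : Integrable h μ) :
    μ[fun x => φ x * h x | m] =ᵐ[μ] fun x => φ x * (μ[h | m]) x :=
  condExp_bilin_of_aestronglyMeasurable_left (ContinuousLinearMap.mul ℝ ℂ)
    hφ.aestronglyMeasurable hφh hh

lemma condExp_conj {h : X → ℂ} (hh : Integrable h μ) :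
    μ[fun x => conj (h x) | m] =ᵐ[μ] fun x => conj ((μ[h | m]) x) :=
  (ContinuousLinearMap.comp_condExp_comm hh
    (Complex.conjCLE : ℂ →L[ℝ] ℂ)).symm

lemma condExp_ofReal' {h : X → ℝ} (hh : Integrable h μ) :
    μ[fun x => ((h x : ℝ) : ℂ) | m] =ᵐ[μ] fun x => (((μ[h | m]) x : ℝ) : ℂ) :=
  (ContinuousLinearMap.comp_condExp_comm hh Complex.ofRealCLM).symm

lemma integrable_bdd_mul (hm : m ≤ m0) {c h : X → ℂ} (hc : StronglyMeasurable[m] c)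
    (hb : ∀ x, ‖c x‖ ≤ 1) (hh : Integrable h μ) : Integrable (fun x => c x * h x) μ :=
  hh.bdd_mul (hc.mono hm).aestronglyMeasurable (.of_forall hb)

lemma condExp_lin (hm : m ≤ m0) {c d h k : X → ℂ} (hc : StronglyMeasurable[m] c)
    (hd : StronglyMeasurable[m] d) (hcb : ∀ x, ‖c x‖ ≤ 1) (hdb : ∀ x, ‖d x‖ ≤ 1)
    (hh : Integrable h μ) (hk : Integrable k μ) :
    μ[fun x => c x * h x - d x * k x | m] =ᵐ[μ]
      fun x => c x * (μ[h | m]) x - d x * (μ[k | m]) x := by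
  have h1 := integrable_bdd_mul hm hc hcb hh
  have h2 := integrable_bdd_mul hm hd hdb hk
  filter_upwards [condExp_sub h1 h2 m, condExp_pull hc h1 hh, condExp_pull hd h2 hk]
    with x e1 e2 e3
  rw [← e2, ← e3]
  exact e1

/-- A form of the pull-out property in which `φ h` need not be integrable. -/
lemma condExp_pull_eq (hm : m ≤ m0) {a b h k : X → ℂ} (ha : StronglyMeasurable[m] a)
    (hb : StronglyMeasurable[m] b) (hh : Integrable h μ) (hk : Integrable k μ)
    (hab : ∀ᵐ x ∂μ, a x * h x = b x * k x) :
    ∀ᵐ x ∂μ, a x * (μ[h | m]) x = b x * (μ[k | m]) x := by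
  have hψ := stronglyMeasurable_cut ha hb
  have e := condExp_lin hm (hψ.mul ha) (hψ.mul hb) (norm_cut_mul_left_le a b)
    (norm_cut_mul_right_le a b) hh hk
  have z : (fun x => (cut a b * a) x * h x - (cut a b * b) x * k x) =ᵐ[μ] (0 : X → ℂ) := by
    filter_upwards [hab] with x hx
    simp only [Pi.mul_apply, Pi.zero_apply, mul_assoc, hx, sub_self]
  have z' := condExp_congr_ae (m := m) z
  rw [condExp_zero] at z'
  filter_upwards [e, z'] with x e z'
  rw [z'] at e
  simp only [Pi.mul_apply, Pi.zero_apply, mul_assoc] at e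
  rw [← mul_sub] at e
  exact sub_eq_zero.1 ((mul_eq_zero.1 e.symm).resolve_left (cut_ne_zero a b x))

/-- The equality case of the conditional Cauchy–Schwarz inequality: the difference of the two
sides is orthogonal, in the conditional sense, to both `ū` and `w`, hence to itself. -/
lemma equality_case (hm : m ≤ m0) [SigmaFinite (μ.trim hm)] {u w : X → ℂ}
    (hu : MemLp u 2 μ) (hw : MemLp w 2 μ)
    (h : ∀ᵐ x ∂μ, conj ((μ[fun y => u y * w y | m]) x) * (μ[fun y => u y * w y | m]) x =
      (μ[fun y => u y * conj (u y) | m]) x * (μ[fun y => w y * conj (w y) | m]) x) :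
    ∀ᵐ x ∂μ, (μ[fun y => w y * conj (w y) | m]) x * conj (u x) =
      conj ((μ[fun y => u y * w y | m]) x) * w x := by
  have iuw := integrable_mul_of_memLp hu hw
  have iuu := integrable_mul_of_memLp hu (memLp_conj hu)
  have iww := integrable_mul_of_memLp hw (memLp_conj hw)
  have iuw' : Integrable (fun x => conj (u x * w x)) μ := by
    simpa only [map_mul] using integrable_mul_of_memLp (memLp_conj hu) (memLp_conj hw)
  have cE := condExp_conj (m := m) iuw
  set g := μ[fun y => u y * w y | m] with hg
  set e := μ[fun y => w y * conj (w y) | m] with he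
  set eu := μ[fun y => u y * conj (u y) | m] with heu
  have mg : StronglyMeasurable[m] (fun x => conj (g x)) :=
    stronglyMeasurable_conj stronglyMeasurable_condExp
  have me : StronglyMeasurable[m] e := stronglyMeasurable_condExp
  obtain ⟨ψ, hψ⟩ : ∃ ψ, ψ = cut e (fun x => conj (g x)) := ⟨_, rfl⟩
  have mψ : StronglyMeasurable[m] ψ := hψ ▸ stronglyMeasurable_cut me mg
  obtain ⟨p, hp⟩ : ∃ p : X → ℂ, p = fun x => ψ x * e x := ⟨_, rfl⟩
  obtain ⟨q, hq⟩ : ∃ q : X → ℂ, q = fun x => ψ x * conj (g x) := ⟨_, rfl⟩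
  have mp : StronglyMeasurable[m] p := hp ▸ mψ.mul me
  have mq : StronglyMeasurable[m] q := hq ▸ mψ.mul mg
  have bp : ∀ x, ‖p x‖ ≤ 1 := by
    subst hp hψ; exact norm_cut_mul_left_le _ _
  have bq : ∀ x, ‖q x‖ ≤ 1 := by
    subst hq hψ; exact norm_cut_mul_right_le e (fun x => conj (g x))
  obtain ⟨V, hV⟩ : ∃ V : X → ℂ, V = fun x => p x * conj (u x) - q x * w x := ⟨_, rfl⟩
  have LV : MemLp V 2 μ := hV ▸
    (memLp_bdd_mul (mp.mono hm).aestronglyMeasurable bp (memLp_conj hu)).sub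
      (memLp_bdd_mul (mq.mono hm).aestronglyMeasurable bq hw)
  have E1 : μ[fun x => V x * u x | m] =ᵐ[μ] 0 := by
    have := condExp_lin hm mp mq bp bq iuu iuw
    have r : (fun x => V x * u x) =
        fun x => p x * (u x * conj (u x)) - q x * (u x * w x) := by
      subst hV; funext x; ring
    rw [r]
    filter_upwards [this, h] with x h1 h2
    rw [h1, hp, hq, ← hg, ← heu]
    simp only [Pi.zero_apply]
    linear_combination (-ψ x) * h2
  have E2 : μ[fun x => V x * conj (w x) | m] =ᵐ[μ] 0 := by
    have := condExp_lin hm mp mq bp bq iuw' iww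
    have r : (fun x => V x * conj (w x)) =
        fun x => p x * conj (u x * w x) - q x * (w x * conj (w x)) := by
      subst hV; funext x; simp only [map_mul]; ring
    rw [r]
    filter_upwards [this, cE] with x h1 h2
    rw [h1, hp, hq, h2, ← he]
    simp only [Pi.zero_apply]
    ring
  have E3 : μ[fun x => V x * conj (V x) | m] =ᵐ[μ] 0 := by
    have := condExp_lin hm (stronglyMeasurable_conj mp) (stronglyMeasurable_conj mq)
      (by simpa using bp) (by simpa using bq) (integrable_mul_of_memLp LV hu)
      (integrable_mul_of_memLp LV (memLp_conj hw))
    have r : (fun x => V x * conj (V x)) =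
        fun x => conj (p x) * (V x * u x) - conj (q x) * (V x * conj (w x)) := by
      funext x
      have : conj (V x) = conj (p x) * u x - conj (q x) * conj (w x) := by
        rw [hV]; simp
      rw [this]; ring
    rw [r]
    filter_upwards [this, E1, E2] with x h1 h2 h3
    rw [h1, h2, h3]
    simp
  have I0 : ∫ x, V x * conj (V x) ∂μ = 0 := by
    rw [← integral_condExp hm, integral_congr_ae E3]; simp
  have I1 : ∫ x, ‖V x‖ ^ 2 ∂μ = 0 := by
    have : (fun x => V x * conj (V x)) = fun x => ((‖V x‖ ^ 2 : ℝ) : ℂ) := by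
      funext x; rw [Complex.mul_conj, Complex.normSq_eq_norm_sq]
    rw [this, integral_complex_ofReal] at I0
    exact_mod_cast I0
  have V0 := (integral_eq_zero_iff_of_nonneg (fun x => by positivity)
    ((memLp_two_iff_integrable_sq_norm LV.1).1 LV)).1 I1
  filter_upwards [V0] with x hx
  have hx : V x = 0 := by simpa using hx
  rw [hV, hp, hq] at hx
  have : ψ x * (e x * conj (u x) - conj (g x) * w x) = 0 := by linear_combination hx
  exact sub_eq_zero.1 ((mul_eq_zero.1 this).resolve_left (hψ ▸ cut_ne_zero _ _ x))

/-- The adjoint of `f ↦ w E(u f)` is `f ↦ ū E(w̄ f)`. -/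
lemma adjoint_coeFn (hm : m ≤ m0) [SigmaFinite (μ.trim hm)] {u w : X → ℂ}
    (hu : MemLp u 2 μ) (hw : MemLp w 2 μ) (T : Lp ℂ 2 μ →L[ℂ] Lp ℂ 2 μ)
    (hT : ∀ f : Lp ℂ 2 μ, ⇑(T f) =ᵐ[μ] fun x => w x * (μ[fun y => u y * f y | m]) x)
    (f : Lp ℂ 2 μ) :
    ⇑(ContinuousLinearMap.adjoint T f) =ᵐ[μ]
      fun x => conj (u x) * (μ[fun y => conj (w y) * f y | m]) x := by
  have iG := integrable_mul_of_memLp (memLp_conj hw) (Lp.memLp f)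
  have iG' : Integrable (fun x => w x * conj (f x)) μ :=
    integrable_mul_of_memLp hw (memLp_conj (Lp.memLp f))
  have cG : μ[fun x => w x * conj (f x) | m] =ᵐ[μ]
      fun x => conj ((μ[fun y => conj (w y) * f y | m]) x) := by
    have := condExp_conj (m := m) iG
    simpa only [map_mul, Complex.conj_conj] using this
  set G := μ[fun y => conj (w y) * f y | m] with hG
  have mG : StronglyMeasurable[m] G := stronglyMeasurable_condExp
  obtain ⟨ψ, hψ⟩ : ∃ ψ, ψ = cut G G := ⟨_, rfl⟩
  have mψ : StronglyMeasurable[m] ψ := hψ ▸ stronglyMeasurable_cut mG mG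
  have bψ : ∀ x, ‖ψ x‖ ≤ 1 := hψ ▸ norm_cut_le G G
  have bψG : ∀ x, ‖ψ x * G x‖ ≤ 1 := hψ ▸ norm_cut_mul_left_le G G
  have cψ : ∀ x, conj (ψ x) = ψ x := hψ ▸ conj_cut G G
  have mψG : StronglyMeasurable[m] (fun x => ψ x * G x) := mψ.mul mG
  have L1 : MemLp (fun x => ψ x * (ContinuousLinearMap.adjoint T f) x) 2 μ :=
    memLp_bdd_mul (mψ.mono hm).aestronglyMeasurable bψ (Lp.memLp _)
  have L2 : MemLp (fun x => (ψ x * G x) * conj (u x)) 2 μ :=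
    memLp_bdd_mul (mψG.mono hm).aestronglyMeasurable bψG (memLp_conj hu)
  have key : L1.toLp _ = L2.toLp _ := by
    refine ext_inner_right ℂ fun k => ?_
    have Lk : MemLp (fun x => ψ x * k x) 2 μ :=
      memLp_bdd_mul (mψ.mono hm).aestronglyMeasurable bψ (Lp.memLp _)
    have iuk : Integrable (fun x => u x * k x) μ := integrable_mul_of_memLp hu (Lp.memLp k)
    have mK : StronglyMeasurable[m] (μ[fun x => u x * k x | m]) := stronglyMeasurable_condExp
    -- `T (ψ k) = w ψ E(u k)`
    have hTk : ⇑(T (Lk.toLp _)) =ᵐ[μ]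
        fun x => w x * (ψ x * (μ[fun y => u y * k y | m]) x) := by
      have c1 : (fun y => u y * (Lk.toLp _) y) =ᵐ[μ] fun y => ψ y * (u y * k y) := by
        filter_upwards [Lk.coeFn_toLp] with x hx
        rw [hx]; ring
      filter_upwards [hT (Lk.toLp _), condExp_congr_ae (m := m) c1,
        condExp_pull mψ (integrable_bdd_mul hm mψ bψ iuk) iuk] with x h1 h2 h3
      rw [h1, h2, h3]
    have s1 : inner ℂ (L1.toLp _) k = inner ℂ f (T (Lk.toLp _)) := by
      rw [← ContinuousLinearMap.adjoint_inner_left, MeasureTheory.L2.inner_def, MeasureTheory.L2.inner_def]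
      refine integral_congr_ae ?_
      filter_upwards [L1.coeFn_toLp, Lk.coeFn_toLp] with x h1 h2
      rw [h1, h2]
      simp only [RCLike.inner_apply, map_mul, cψ]
      ring
    have s2 : inner ℂ f (T (Lk.toLp _)) =
        ∫ x, (ψ x * (μ[fun y => u y * k y | m]) x) * (w x * conj (f x)) ∂μ := by
      rw [MeasureTheory.L2.inner_def]
      refine integral_congr_ae ?_
      filter_upwards [hTk] with x h1
      rw [h1]
      simp only [RCLike.inner_apply]
      ring
    have i2 : Integrable (fun x =>
        (ψ x * (μ[fun y => u y * k y | m]) x) * (w x * conj (f x))) μ := by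
      refine (integrable_mul_of_memLp (Lp.memLp (T (Lk.toLp _)))
        (memLp_conj (Lp.memLp f))).congr ?_
      filter_upwards [hTk] with x h1
      rw [h1]; ring
    have s3 : ∫ x, (ψ x * (μ[fun y => u y * k y | m]) x) * (w x * conj (f x)) ∂μ =
        ∫ x, conj (ψ x * G x) * (μ[fun y => u y * k y | m]) x ∂μ := by
      rw [← integral_condExp hm]
      refine integral_congr_ae ?_
      filter_upwards [condExp_pull (mψ.mul mK) i2 iG', cG] with x h1 h2
      refine h1.trans ?_
      rw [h2]
      simp only [Pi.mul_apply, map_mul, cψ]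
      ring
    have mc := stronglyMeasurable_conj mψG
    have bc : ∀ x, ‖conj (ψ x * G x)‖ ≤ 1 := fun x => by
      rw [RCLike.norm_conj]; exact bψG x
    have s4 : ∫ x, conj (ψ x * G x) * (μ[fun y => u y * k y | m]) x ∂μ =
        ∫ x, conj (ψ x * G x) * (u x * k x) ∂μ := by
      rw [← integral_condExp hm (f := fun x => conj (ψ x * G x) * (u x * k x))]
      exact integral_congr_ae
        (condExp_pull mc (integrable_bdd_mul hm mc bc iuk) iuk).symm
    rw [s1, s2, s3, s4, MeasureTheory.L2.inner_def]
    refine integral_congr_ae ?_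
    filter_upwards [L2.coeFn_toLp] with x h1
    rw [h1]
    simp only [RCLike.inner_apply, map_mul, Complex.conj_conj]
    ring
  filter_upwards [L1.coeFn_toLp, L2.coeFn_toLp] with x h1 h2
  rw [key, h2] at h1
  have h0 : ψ x ≠ 0 := hψ ▸ cut_ne_zero _ _ x
  apply mul_left_cancel₀ h0
  linear_combination -h1

end Aux

lemma centered_of_commute {H : Type*} [NormedAddCommGroup H] [InnerProductSpace ℂ H]
    [CompleteSpace H] {A : H →L[ℂ] H} (hA : Commute (ContinuousLinearMap.adjoint A) A) :
    Centered A := by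
  have key : ∀ B, (∃ n : ℕ, B = (ContinuousLinearMap.adjoint A) ^ n * A ^ n ∨
      B = A ^ n * (ContinuousLinearMap.adjoint A) ^ n) →
      Commute B A ∧ Commute B (ContinuousLinearMap.adjoint A) := by
    rintro B ⟨n, rfl | rfl⟩
    · exact ⟨(hA.pow_left n).mul_left ((Commute.refl A).pow_left n),
        ((Commute.refl _).pow_left n).mul_left (hA.symm.pow_left n)⟩
    · exact ⟨((Commute.refl A).pow_left n).mul_left (hA.pow_left n),
        (hA.symm.pow_left n).mul_left ((Commute.refl _).pow_left n)⟩
  rintro B hB C ⟨k, rfl | rfl⟩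
  · exact ((key B hB).2.pow_right k).mul_right ((key B hB).1.pow_right k)
  · exact ((key B hB).1.pow_right k).mul_right ((key B hB).2.pow_right k)

/-- **Theorem 2.5 (b).** If `|E(uw)|² = E(|u|²) E(|w|²)` μ-a.e., then the bounded
weighted conditional type operator `T = M_w E M_u` on `L²(Σ)` is centered. -/
theorem stmt_5 {X : Type*} [m0 : MeasurableSpace X] {μ : Measure X} [μ.IsComplete]
    [SigmaFinite μ] {m : MeasurableSpace X} (hm : m ≤ m0) [SigmaFinite (μ.trim hm)]
    (u w : X → ℂ) (hu : AEMeasurable u μ) (hw : AEMeasurable w μ)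
    (hu2 : Integrable (fun x => ‖u x‖ ^ 2) μ) (hw2 : Integrable (fun x => ‖w x‖ ^ 2) μ)
    (huw : Integrable (fun x => u x * w x) μ)
    (hintu : ∀ f : Lp ℂ 2 μ, Integrable (fun x => u x * f x) μ)
    (T : Lp ℂ 2 μ →L[ℂ] Lp ℂ 2 μ)
    (hT : ∀ f : Lp ℂ 2 μ, ⇑(T f) =ᵐ[μ] fun x => w x * (μ[fun y => u y * f y | m]) x)
    (h : ∀ᵐ x ∂μ, ‖(μ[fun y => u y * w y | m]) x‖ ^ 2 =
      (μ[fun y => ‖u y‖ ^ 2 | m]) x * (μ[fun y => ‖w y‖ ^ 2 | m]) x) :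
    Centered T := by
  have Lu : MemLp u 2 μ := (memLp_two_iff_integrable_sq_norm hu.aestronglyMeasurable).2 hu2
  have Lw : MemLp w 2 μ := (memLp_two_iff_integrable_sq_norm hw.aestronglyMeasurable).2 hw2
  have sq : ∀ v : X → ℂ, (fun y => ((‖v y‖ ^ 2 : ℝ) : ℂ)) = fun y => v y * conj (v y) := by
    intro v; funext y; rw [Complex.mul_conj, Complex.normSq_eq_norm_sq]
  have h' : ∀ᵐ x ∂μ, conj ((μ[fun y => u y * w y | m]) x) * (μ[fun y => u y * w y | m]) x =
      (μ[fun y => u y * conj (u y) | m]) x * (μ[fun y => w y * conj (w y) | m]) x := by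
    have eu := condExp_ofReal' (m := m) hu2
    have ew := condExp_ofReal' (m := m) hw2
    rw [sq] at eu ew
    filter_upwards [h, eu, ew] with x h1 h2 h3
    rw [h2, h3, ← Complex.ofReal_mul, ← h1, mul_comm, Complex.mul_conj,
      Complex.normSq_eq_norm_sq]
  have swap : (fun y => w y * u y) = fun y => u y * w y := by funext y; ring
  have cs1 := equality_case hm Lu Lw h'
  have cs2 : ∀ᵐ x ∂μ, (μ[fun y => u y * conj (u y) | m]) x * conj (w x) =
      conj ((μ[fun y => u y * w y | m]) x) * u x := by
    have := equality_case (u := w) (w := u) hm Lw Lu (by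
      rw [swap]; filter_upwards [h'] with x hx; rw [hx, mul_comm])
    rwa [swap] at this
  have hA := adjoint_coeFn hm Lu Lw T hT
  refine centered_of_commute ?_
  have norm1 : ∀ f, ContinuousLinearMap.adjoint T (T f) = T (ContinuousLinearMap.adjoint T f) := by
    intro f
    have iuf := integrable_mul_of_memLp Lu (Lp.memLp f)
    have iwf := integrable_mul_of_memLp (memLp_conj Lw) (Lp.memLp f)
    have iww := integrable_mul_of_memLp Lw (memLp_conj Lw)
    have iuu := integrable_mul_of_memLp Lu (memLp_conj Lu)
    have a1 : (fun y => conj (w y) * (T f) y) =ᵐ[μ]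
        fun y => (μ[fun y => u y * f y | m]) y * (w y * conj (w y)) := by
      filter_upwards [hT f] with x hx
      rw [hx]; ring
    have a2 : (fun y => u y * (ContinuousLinearMap.adjoint T f) y) =ᵐ[μ]
        fun y => (μ[fun y => conj (w y) * f y | m]) y * (u y * conj (u y)) := by
      filter_upwards [hA f] with x hx
      rw [hx]; ring
    have b1 := condExp_pull (m := m) stronglyMeasurable_condExp
      ((integrable_mul_of_memLp (memLp_conj Lw) (Lp.memLp (T f))).congr a1) iww
    have b2 := condExp_pull (m := m) stronglyMeasurable_condExp
      ((integrable_mul_of_memLp Lu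
        (Lp.memLp (ContinuousLinearMap.adjoint T f))).congr a2) iuu
    have c := condExp_pull_eq hm (a := μ[fun y => u y * conj (u y) | m])
      (b := fun x => conj ((μ[fun y => u y * w y | m]) x)) stronglyMeasurable_condExp
      (stronglyMeasurable_conj stronglyMeasurable_condExp) iwf iuf (by
        filter_upwards [cs2] with x hx
        rw [← mul_assoc, hx, mul_assoc])
    refine Lp.ext ?_
    filter_upwards [hA (T f), hT (ContinuousLinearMap.adjoint T f),
      condExp_congr_ae (m := m) a1, condExp_congr_ae (m := m) a2, b1, b2, c, cs1]
      with x h1 h2 h3 h4 h5 h6 h7 h8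
    rw [h1, h2, h3, h4, h5, h6]
    linear_combination (μ[fun y => u y * f y | m]) x * h8 - w x * h7
  exact ContinuousLinearMap.ext norm1
end

section
/- Let E M_u (the operator f ↦ E(u f)) be bounded on L²(Σ) and suppose S(E(u)) = S(E(|u|²)) up to μ-null sets. Then E M_u is centered if and only if u is μ-a.e. equal to an 𝒜-measurable function. -/
/-! Write `E` for the conditional expectation `μ[· | m]`, so that `T f = E (u f)`. The range of
`T` consists of `m`-measurable functions, and `adjoint_apply_ae` shows `T* g = ū g` for every
`m`-measurable `g` in `L²`.

If `T` is centered then `T*T` and `TT*` commute. Applied to the indicator `e` of an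
`m`-measurable set of finite measure, `T*T TT* e = ū · E u · E |u|² · e`, and this equals
`TT* T*T e`, which is `m`-measurable. Dividing, `u` is `m`-measurable on the part of the set where
`E u · E |u|² ≠ 0`. By the support hypothesis the complement of that part is `{E |u|² = 0}`, where
`u` vanishes. The space is a countable union of such sets.

Conversely, if `u` is `m`-measurable, then `T*T` and `TT*` are self-adjoint operators with range in
the subspace of `m`-measurable functions, and on that subspace both are multiplication by `|u|²`.
Two self-adjoint operators that agree on a subspace containing both ranges are equal, so `T` is
normal, and a normal operator is centered. -/

open MeasureTheory ComplexConjugate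

theorem centered_of_commute_adjoint {H : Type*} [NormedAddCommGroup H] [InnerProductSpace ℂ H]
    [CompleteSpace H] {A : H →L[ℂ] H} (h : Commute (ContinuousLinearMap.adjoint A) A) :
    Centered A := by
  have key : ∀ B ∈ {B : H →L[ℂ] H | ∃ n : ℕ,
      B = (ContinuousLinearMap.adjoint A) ^ n * A ^ n ∨
      B = A ^ n * (ContinuousLinearMap.adjoint A) ^ n},
      Commute B A ∧ Commute B (ContinuousLinearMap.adjoint A) := by
    rintro B ⟨n, rfl | rfl⟩
    · exact ⟨(h.pow_left n).mul_left ((Commute.refl A).pow_left n),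
        ((Commute.refl _).pow_left n).mul_left (h.symm.pow_left n)⟩
    · exact ⟨((Commute.refl A).pow_left n).mul_left (h.pow_left n),
        (h.symm.pow_left n).mul_left ((Commute.refl _).pow_left n)⟩
  rintro B hB C ⟨k, rfl | rfl⟩
  · exact ((key B hB).2.pow_right k).mul_right ((key B hB).1.pow_right k)
  · exact ((key B hB).1.pow_right k).mul_right ((key B hB).2.pow_right k)

section

variable {X : Type*} {m m0 : MeasurableSpace X} {μ : Measure X}

/-- The pull-out property of the conditional expectation for complex-valued functions. -/
theorem condExp_mul_right_complex {f g : X → ℂ} (hg : AEStronglyMeasurable[m] g μ)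
    (hfg : Integrable (fun x => f x * g x) μ) (hf : Integrable f μ) :
    μ[fun x => f x * g x | m] =ᵐ[μ] fun x => (μ[f | m]) x * g x :=
  condExp_bilin_of_aestronglyMeasurable_right (ContinuousLinearMap.mul ℝ ℂ) hg hfg hf

theorem condExp_ofReal_complex {f : X → ℝ} (hf : Integrable f μ) :
    μ[fun x => (f x : ℂ) | m] =ᵐ[μ] fun x => (((μ[f | m]) x : ℝ) : ℂ) :=
  (Complex.ofRealCLM.comp_condExp_comm hf).symm

theorem ae_eq_zero_of_condExp_sq_eq_zero (hm : m ≤ m0) [SigmaFinite (μ.trim hm)] {u : X → ℂ}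
    (hu2 : Integrable (fun x => ‖u x‖ ^ 2) μ) :
    ∀ᵐ x ∂μ, (μ[fun y => ‖u y‖ ^ 2 | m]) x = 0 → u x = 0 := by
  set w := μ[fun y => ‖u y‖ ^ 2 | m] with hw
  have hs : MeasurableSet[m] {x | w x = 0} :=
    stronglyMeasurable_condExp.measurable (measurableSet_singleton (0 : ℝ))
  have h1 : ∫ x in {x | w x = 0}, ‖u x‖ ^ 2 ∂μ = 0 := by
    rw [← setIntegral_condExp hm hu2 hs, ← hw]
    exact setIntegral_eq_zero_of_forall_eq_zero fun x hx => hx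
  rw [setIntegral_eq_zero_iff_of_nonneg_ae (ae_of_all _ fun x => by positivity)
    hu2.integrableOn] at h1
  have h2 := (ae_restrict_iff' (hm _ hs)).1 h1
  filter_upwards [h2] with x hx h0
  simpa using hx h0

variable {u : X → ℂ} {T : Lp ℂ 2 μ →L[ℂ] Lp ℂ 2 μ}

theorem aestronglyMeasurable_apply
    (hT : ∀ f : Lp ℂ 2 μ, ⇑(T f) =ᵐ[μ] μ[fun y => u y * f y | m]) (f : Lp ℂ 2 μ) :
    AEStronglyMeasurable[m] (T f : X → ℂ) μ :=
  stronglyMeasurable_condExp.aestronglyMeasurable.congr (hT f).symm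

/-- On `m`-measurable functions the adjoint of `E M_u` is multiplication by `ū`. -/
theorem adjoint_apply_ae [SigmaFinite μ] (hm : m ≤ m0) [SigmaFinite (μ.trim hm)]
    (hu : AEMeasurable u μ) (hu2 : Integrable (fun x => ‖u x‖ ^ 2) μ)
    (hintu : ∀ f : Lp ℂ 2 μ, Integrable (fun x => u x * f x) μ)
    (hT : ∀ f : Lp ℂ 2 μ, ⇑(T f) =ᵐ[μ] μ[fun y => u y * f y | m])
    {g : Lp ℂ 2 μ} (hg : AEStronglyMeasurable[m] (g : X → ℂ) μ) :
    ⇑(ContinuousLinearMap.adjoint T g) =ᵐ[μ] fun x => conj (u x) * g x := by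
  have hu' : MemLp u 2 μ := (memLp_two_iff_integrable_sq_norm hu.aestronglyMeasurable).2 hu2
  have hgc : AEStronglyMeasurable[m] (fun x => conj (g x)) μ :=
    Complex.continuous_conj.comp_aestronglyMeasurable hg
  have hugc : Integrable (fun x => u x * conj (g x)) μ := hu'.integrable_mul (Lp.memLp g).star
  have hug : Integrable (fun x => conj (u x) * g x) μ := hu'.star.integrable_mul (Lp.memLp g)
  refine ae_eq_of_forall_setIntegral_eq_of_sigmaFinite
    (fun s _ hμs => integrableOn_Lp_of_measure_ne_top _ (by norm_num) hμs.ne)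
    (fun s _ _ => hug.integrableOn) fun s hs hμs => ?_
  set e : Lp ℂ 2 μ := indicatorConstLp 2 hs hμs.ne 1 with he
  have hee : ⇑e =ᵐ[μ] s.indicator fun _ => 1 := indicatorConstLp_coeFn
  have hind : (fun x => u x * e x * conj (g x)) =ᵐ[μ]
      s.indicator fun x => u x * conj (g x) := by
    filter_upwards [hee] with x hx
    by_cases hxs : x ∈ s <;> simp [hx, hxs]
  have hpull := condExp_mul_right_complex (f := fun x => u x * e x) hgc
    ((hugc.indicator hs).congr hind.symm) (hintu e)
  have hTe : (fun x => inner ℂ (T e x) (g x)) =ᵐ[μ]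
      fun x => conj ((μ[fun x => u x * e x * conj (g x) | m]) x) := by
    filter_upwards [hT e, hpull] with x h1 h2
    rw [h2, h1, RCLike.inner_apply, map_mul, Complex.conj_conj, mul_comm]
  rw [← L2.inner_indicatorConstLp_one hs hμs.ne, ContinuousLinearMap.adjoint_inner_right,
    L2.inner_def, integral_congr_ae hTe, integral_conj, integral_condExp hm,
    integral_congr_ae hind, integral_indicator hs, ← integral_conj]
  simp

end

/-- **Corollary 2.8.** If `S(E(u)) = S(E(|u|²))` up to μ-null sets, then the bounded
operator `T = E M_u` on `L²(Σ)` is centered iff `u` is μ-a.e. equal to an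
𝒜-measurable function. -/
theorem stmt_8 {X : Type*} [m0 : MeasurableSpace X] {μ : Measure X} [μ.IsComplete]
    [SigmaFinite μ] {m : MeasurableSpace X} (hm : m ≤ m0) [SigmaFinite (μ.trim hm)]
    (u : X → ℂ) (hu : AEMeasurable u μ)
    (hui : Integrable u μ) (hu2 : Integrable (fun x => ‖u x‖ ^ 2) μ)
    (hintu : ∀ f : Lp ℂ 2 μ, Integrable (fun x => u x * f x) μ)
    (T : Lp ℂ 2 μ →L[ℂ] Lp ℂ 2 μ)
    (hT : ∀ f : Lp ℂ 2 μ, ⇑(T f) =ᵐ[μ] μ[fun y => u y * f y | m])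
    (hsupp : ∀ᵐ x ∂μ, (μ[u | m]) x ≠ 0 ↔ (μ[fun y => ‖u y‖ ^ 2 | m]) x ≠ 0) :
    Centered T ↔ ∃ v : X → ℂ, Measurable[m] v ∧ u =ᵐ[μ] v := by
  set S := ContinuousLinearMap.adjoint T with hS
  have hTm : ∀ f : Lp ℂ 2 μ, AEStronglyMeasurable[m] (T f : X → ℂ) μ :=
    aestronglyMeasurable_apply hT
  have hadj : ∀ g : Lp ℂ 2 μ, AEStronglyMeasurable[m] (g : X → ℂ) μ →
      ⇑(S g) =ᵐ[μ] fun x => conj (u x) * g x := fun g hg =>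
    adjoint_apply_ae hm hu hu2 hintu hT hg
  have hTpull : ∀ g : Lp ℂ 2 μ, AEStronglyMeasurable[m] (g : X → ℂ) μ →
      ⇑(T g) =ᵐ[μ] fun x => (μ[u | m]) x * g x := fun g hg =>
    (hT g).trans (condExp_mul_right_complex hg (hintu g) hui)
  constructor
  · intro hc
    have hcomm : Commute (S * T) (T * S) :=
      hc (S * T) ⟨1, Or.inl (by simp [hS])⟩ (T * S) ⟨1, Or.inr (by simp [hS])⟩
    set w := μ[fun y => ‖u y‖ ^ 2 | m] with hw
    have huu : Integrable (fun x => u x * conj (u x)) μ := by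
      refine hu2.ofReal.congr (ae_of_all _ fun x => ?_)
      simp [Complex.mul_conj, Complex.normSq_eq_norm_sq]
    have hW : μ[fun x => u x * conj (u x) | m] =ᵐ[μ] fun x => ((w x : ℝ) : ℂ) := by
      refine (condExp_congr_ae (ae_of_all _ fun x => ?_)).trans (condExp_ofReal_complex hu2)
      simp [Complex.mul_conj, Complex.normSq_eq_norm_sq]
    let A := spanningSets (μ.trim hm)
    have hA : ∀ k, MeasurableSet[m] (A k) := measurableSet_spanningSets _
    have hAμ : ∀ k, μ (A k) ≠ ⊤ := fun k => by
      rw [← trim_measurableSet_eq hm (hA k)]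
      exact (measure_spanningSets_lt_top _ k).ne
    have hloc : ∀ k, AEStronglyMeasurable[m] ((A k).indicator u) μ := by
      intro k
      set e : Lp ℂ 2 μ := indicatorConstLp 2 (hm _ (hA k)) (hAμ k) 1 with he
      have hee : ⇑e =ᵐ[μ] (A k).indicator fun _ => 1 := indicatorConstLp_coeFn
      have hem : AEStronglyMeasurable[m] (e : X → ℂ) μ :=
        (stronglyMeasurable_const.indicator (hA k)).aestronglyMeasurable.congr hee.symm
      have hTS : ⇑(T (S e)) =ᵐ[μ] fun x => (w x : ℂ) * e x := by
        have h1 : (fun x => u x * S e x) =ᵐ[μ] fun x => u x * conj (u x) * e x := by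
          filter_upwards [hadj e hem] with x hx
          rw [hx, mul_assoc]
        filter_upwards [hT (S e), condExp_congr_ae (m := m) h1,
          condExp_mul_right_complex hem ((hintu (S e)).congr h1) huu, hW] with x a b c d
        rw [a, b, c, d]
      have hh : ⇑(S (T (T (S e)))) =ᵐ[μ]
          fun x => conj (u x) * ((μ[u | m]) x * ((w x : ℂ) * e x)) := by
        filter_upwards [hadj _ (hTm (T (S e))), hTpull _ (hTm (S e)), hTS] with x a b c
        rw [a, b, c]
      have hhm : AEStronglyMeasurable[m] (S (T (T (S e))) : X → ℂ) μ := by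
        have : S (T (T (S e))) = T (S (S (T e))) := congrArg (fun B => B e) hcomm.eq
        rw [this]
        exact hTm _
      have hEw : AEStronglyMeasurable[m] (fun x => (μ[u | m]) x * (w x : ℂ)) μ :=
        stronglyMeasurable_condExp.aestronglyMeasurable.mul
          (Complex.continuous_ofReal.comp_aestronglyMeasurable
            stronglyMeasurable_condExp.aestronglyMeasurable)
      -- Where `E u * E |u|² = 0` the quotient is `0` by convention, which is the value of `u` there.
      refine AEStronglyMeasurable.congr
        (Complex.continuous_conj.comp_aestronglyMeasurable (hhm.div₀ hEw)) ?_
      filter_upwards [hh, hee, hsupp, ae_eq_zero_of_condExp_sq_eq_zero hm hu2] with x a b c d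
      by_cases hxA : x ∈ A k
      · by_cases hwx : w x = 0
        · simp [hwx, hxA, d hwx]
        · have hEx := c.2 hwx
          have hwx' : (w x : ℂ) ≠ 0 := by exact_mod_cast hwx
          have : conj (u x) * ((μ[u | m]) x * (w x : ℂ)) / ((μ[u | m]) x * (w x : ℂ))
              = conj (u x) := mul_div_cancel_right₀ _ (mul_ne_zero hEx hwx')
          simp only [Pi.div_apply, a, b, hxA, Set.indicator_of_mem, mul_one, this]
          simp
      · simp [a, b, hxA]
    -- On each `A k` the function `u` is its own conditional expectation.
    have hk : ∀ᵐ x ∂μ, ∀ k, (A k).indicator (μ[u | m]) x = (A k).indicator u x :=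
      ae_all_iff.2 fun k => (condExp_indicator hui (hA k)).symm.trans
        (condExp_of_aestronglyMeasurable' hm (hloc k) (hui.indicator (hm _ (hA k))))
    refine ⟨μ[u | m], stronglyMeasurable_condExp.measurable, ?_⟩
    filter_upwards [hk] with x hx
    obtain ⟨n, hn⟩ := Set.mem_iUnion.1
      ((iUnion_spanningSets (μ.trim hm)).symm ▸ Set.mem_univ x)
    have hxn := hx n
    rw [Set.indicator_of_mem hn, Set.indicator_of_mem hn] at hxn
    exact hxn.symm
  · rintro ⟨v, hv, huv⟩
    have hum : AEStronglyMeasurable[m] u μ :=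
      hv.stronglyMeasurable.aestronglyMeasurable.congr huv.symm
    have hEu : μ[u | m] =ᵐ[μ] u := condExp_of_aestronglyMeasurable' hm hum hui
    have hSm : ∀ g : Lp ℂ 2 μ, AEStronglyMeasurable[m] (g : X → ℂ) μ →
        AEStronglyMeasurable[m] (S g : X → ℂ) μ := fun g hg =>
      ((Complex.continuous_conj.comp_aestronglyMeasurable hum).mul hg).congr (hadj g hg).symm
    have heq : ∀ g : Lp ℂ 2 μ, AEStronglyMeasurable[m] (g : X → ℂ) μ →
        S (T g) = T (S g) := by
      intro g hg
      apply Lp.ext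
      filter_upwards [hadj _ (hTm g), hTpull g hg, hadj g hg, hTpull _ (hSm g hg), hEu]
        with x a b c d e
      rw [a, b, d, c, e]
      ring
    apply centered_of_commute_adjoint
    ext1 f
    change S (T f) = T (S f)
    set d := S (T f) - T (S f) with hd
    have hdm : AEStronglyMeasurable[m] (d : X → ℂ) μ :=
      ((hSm _ (hTm f)).sub (hTm (S f))).congr (Lp.coeFn_sub _ _).symm
    -- `d` is `m`-measurable, so moving both operators onto the other argument gives `⟪d, d⟫ = 0`.
    have h0 : inner ℂ d d = 0 := by
      conv_lhs => rw [hd, inner_sub_left]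
      rw [hS, ContinuousLinearMap.adjoint_inner_left, ← ContinuousLinearMap.adjoint_inner_right,
        ← ContinuousLinearMap.adjoint_inner_right, ContinuousLinearMap.adjoint_inner_left,
        ← hS, heq d hdm, sub_self]
    exact sub_eq_zero.1 (inner_self_eq_zero.1 h0)
end
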